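/- For a ring R and non-negative integers n, k: l.n.sp.gldim(R) ≤ k if and only if every (n,k)-weak cotorsion right R-module has n-weak flat dimension at most k. -/

import Mathlib

/-!
Common definitions for formalizing "(n,k)-weak cotorsion modules" over an arbitrary
(not necessarily commutative) ring `R`.  Left `R`-modules are objects of
`ModuleCat R`, right `R`-modules are objects of `ModuleCat Rᵐᵒᵖ`.

Since Mathlib does not provide `Tor` of a right module with a left module over a
noncommutative ring, we encode the vanishing of `Tor_i^R(N, M)` (for `N` a right
module and `M` a left module) by the equivalent condition
`Ext^i_{Rᵐᵒᵖ}(N, M⋆) = 0`, where `M⋆ = Hom_ℤ(M, ℚ/ℤ)` is the character module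
(a right module).  This is equivalent because `ℚ/ℤ` is an injective cogenerator:
`Ext^i_{Rᵐᵒᵖ}(N, M⋆) ≅ (Tor_i^R(N, M))⋆`, and an abelian group vanishes iff its
character group does.
-/

open CategoryTheory

universe u

noncomputable section

/-- The character group `Hom_ℤ(N, ℚ/ℤ)`. -/
def CharGroup (N : Type u) [AddCommGroup N] : Type u := N →+ AddCircle (1 : ℚ)

instance (N : Type u) [AddCommGroup N] : AddCommGroup (CharGroup N) :=
  inferInstanceAs (AddCommGroup (N →+ AddCircle (1 : ℚ)))

namespace CharGroup

variable {N : Type u} [AddCommGroup N]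

/-- View an element of the character group as an additive monoid hom. -/
def toHom (f : CharGroup N) : N →+ AddCircle (1 : ℚ) := f

/-- Build an element of the character group from an additive monoid hom. -/
def ofHom (f : N →+ AddCircle (1 : ℚ)) : CharGroup N := f

theorem hom_ext {f g : CharGroup N} (h : ∀ m, toHom f m = toHom g m) : f = g :=
  AddMonoidHom.ext h

end CharGroup

open CharGroup in
/-- Left module structure on the character group of a right module. -/
instance charGroupModuleLeft (R : Type u) [Ring R] (N : Type u) [AddCommGroup N]
    [Module Rᵐᵒᵖ N] : Module R (CharGroup N) where
  smul r f := ofHom ((toHom f).comp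
    (AddMonoidHom.mk' (fun m => MulOpposite.op r • m) (fun a b => smul_add _ a b)))
  one_smul f := hom_ext fun m => by
    show toHom f (MulOpposite.op (1 : R) • m) = toHom f m
    rw [MulOpposite.op_one, one_smul]
  mul_smul r s f := hom_ext fun m => by
    show toHom f (MulOpposite.op (r * s) • m)
      = toHom f (MulOpposite.op s • MulOpposite.op r • m)
    rw [MulOpposite.op_mul, mul_smul]
  smul_zero r := CharGroup.hom_ext fun m => rfl
  smul_add r f g := CharGroup.hom_ext fun m => rfl
  add_smul r s f := hom_ext fun m => by
    show toHom f (MulOpposite.op (r + s) • m)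
      = toHom f (MulOpposite.op r • m) + toHom f (MulOpposite.op s • m)
    rw [MulOpposite.op_add, add_smul, map_add]
  zero_smul f := hom_ext fun m => by
    show toHom f (MulOpposite.op (0 : R) • m) = 0
    rw [MulOpposite.op_zero, zero_smul, map_zero]

open CharGroup in
/-- Right module structure on the character group of a left module. -/
instance charGroupModuleRight (R : Type u) [Ring R] (N : Type u) [AddCommGroup N]
    [Module R N] : Module Rᵐᵒᵖ (CharGroup N) where
  smul r f := ofHom ((toHom f).comp
    (AddMonoidHom.mk' (fun m => r.unop • m) (fun a b => smul_add _ a b)))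
  one_smul f := hom_ext fun m => by
    show toHom f ((1 : Rᵐᵒᵖ).unop • m) = toHom f m
    rw [MulOpposite.unop_one, one_smul]
  mul_smul r s f := hom_ext fun m => by
    show toHom f ((r * s).unop • m) = toHom f (s.unop • r.unop • m)
    rw [MulOpposite.unop_mul, mul_smul]
  smul_zero r := CharGroup.hom_ext fun m => rfl
  smul_add r f g := CharGroup.hom_ext fun m => rfl
  add_smul r s f := hom_ext fun m => by
    show toHom f ((r + s).unop • m) = toHom f (r.unop • m) + toHom f (s.unop • m)
    rw [MulOpposite.unop_add, add_smul, map_add]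
  zero_smul f := hom_ext fun m => by
    show toHom f ((0 : Rᵐᵒᵖ).unop • m) = 0
    rw [MulOpposite.unop_zero, zero_smul, map_zero]

variable (R : Type u) [Ring R]

/-- `extVanish S i A B` says that `Ext^i_S(A, B) = 0`. -/
def extVanish (S : Type u) [Ring S] (i : ℕ) (A B : ModuleCat.{u} S) : Prop :=
  Subsingleton (((Ext ℤ (ModuleCat.{u} S) i).obj (Opposite.op A)).obj B)

/-- The character module of a right `R`-module, as a left `R`-module. -/
def charLeft (N : ModuleCat.{u} Rᵐᵒᵖ) : ModuleCat.{u} R :=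
  ModuleCat.of R (CharGroup N)

/-- The character module of a left `R`-module, as a right `R`-module. -/
def charRight (M : ModuleCat.{u} R) : ModuleCat.{u} Rᵐᵒᵖ :=
  ModuleCat.of Rᵐᵒᵖ (CharGroup M)

/-- `torVanish R i N M` encodes `Tor_i^R(N, M) = 0` for a right module `N` and a
left module `M`, via the character module duality
`Ext^i_R(M, N⋆) ≅ (Tor_i^R(N, M))⋆`. -/
def torVanish (i : ℕ) (N : ModuleCat.{u} Rᵐᵒᵖ) (M : ModuleCat.{u} R) : Prop :=
  extVanish R i M (charLeft R N)

/-- `K` is a special super finitely presented `S`-module (for the parameter `n`):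
`K` is the image of `F_n → F_{n-1}` in a projective resolution
`⋯ → F_{n+1} → F_n → ⋯ → F_0 → U → 0` of some module `U` in which `F_i` is finitely
generated projective for all `i ≥ n`.  (For `n = 0` the distinguished module is `U`
itself, matching `Ext^{n+1}(U, -) ≅ Ext^1(K_{n-1}, -)`.) -/
def IsSpecialSFP (S : Type u) [Ring S] (n : ℕ) (K : ModuleCat.{u} S) : Prop :=
  ∃ (U : ModuleCat.{u} S) (F : ℕ → ModuleCat.{u} S)
    (d : ∀ i, F (i + 1) →ₗ[S] F i) (π : F 0 →ₗ[S] U),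
      (∀ i, Module.Projective S (F i)) ∧
      (∀ i, n ≤ i → Module.Finite S (F i)) ∧
      Function.Surjective π ∧ Function.Exact (d 0) π ∧
      (∀ i, Function.Exact (d (i + 1)) (d i)) ∧
      (if n = 0 then Nonempty ((K : Type u) ≃ₗ[S] U)
       else Nonempty ((K : Type u) ≃ₗ[S] LinearMap.range (d (n - 1))))

/-- The `n`-weak injective dimension of a left `S`-module `M` is at most `k`. -/
def nwidLE (S : Type u) [Ring S] (n k : ℕ) (M : ModuleCat.{u} S) : Prop :=
  ∀ K : ModuleCat.{u} S, IsSpecialSFP S n K → extVanish S (k + 1) K M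

/-- The `n`-weak flat dimension of a right `R`-module `N` is at most `k`:
`Tor_{k+1}^R(N, K) = 0` for every special super finitely presented left module `K`. -/
def nwfdLE (n k : ℕ) (N : ModuleCat.{u} Rᵐᵒᵖ) : Prop :=
  ∀ K : ModuleCat.{u} R, IsSpecialSFP R n K → torVanish R (k + 1) N K

/-- A right `R`-module `M` is `(n,k)`-weak cotorsion if `Ext^1(N, M) = 0` for every
right module `N` of `n`-weak flat dimension at most `k`. -/
def IsNKWeakCotorsion (n k : ℕ) (M : ModuleCat.{u} Rᵐᵒᵖ) : Prop :=
  ∀ N : ModuleCat.{u} Rᵐᵒᵖ, nwfdLE R n k N → extVanish Rᵐᵒᵖ 1 N M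

/-- Projective dimension at most `k`, via Ext vanishing. -/
def pdLE (S : Type u) [Ring S] (k : ℕ) (K : ModuleCat.{u} S) : Prop :=
  ∀ M : ModuleCat.{u} S, extVanish S (k + 1) K M

/-- Injective dimension at most `k`, via Ext vanishing. -/
def idLE (S : Type u) [Ring S] (k : ℕ) (M : ModuleCat.{u} S) : Prop :=
  ∀ N : ModuleCat.{u} S, extVanish S (k + 1) N M

/-- Flat dimension of a right module at most `k`, via Tor vanishing. -/
def fdLE (k : ℕ) (N : ModuleCat.{u} Rᵐᵒᵖ) : Prop :=
  ∀ A : ModuleCat.{u} R, torVanish R (k + 1) N A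

/-- `l.n.sp.gldim(R) ≤ k` : every special super finitely presented left module has
projective dimension at most `k`. -/
def lnspGldimLE (n k : ℕ) : Prop :=
  ∀ K : ModuleCat.{u} R, IsSpecialSFP R n K → pdLE R k K

/-- `w.gl.dim(R) ≤ k`. -/
def wGldimLE (k : ℕ) : Prop :=
  ∀ N : ModuleCat.{u} Rᵐᵒᵖ, fdLE R k N

/-- A right `R`-module `M` is `k`-cotorsion if `Ext^1(F, M) = 0` for every right
module `F` of flat dimension at most `k`. -/
def IsKCotorsion (k : ℕ) (M : ModuleCat.{u} Rᵐᵒᵖ) : Prop :=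
  ∀ F : ModuleCat.{u} Rᵐᵒᵖ, fdLE R k F → extVanish Rᵐᵒᵖ 1 F M

/-- `φ : E → D` is a `𝒞`-precover of `D`. -/
def IsPrecover (S : Type u) [Ring S] (𝒞 : ModuleCat.{u} S → Prop)
    (E D : ModuleCat.{u} S) (φ : E →ₗ[S] D) : Prop :=
  𝒞 E ∧ ∀ F : ModuleCat.{u} S, 𝒞 F → ∀ g : F →ₗ[S] D, ∃ h : F →ₗ[S] E, φ ∘ₗ h = g

/-- `φ : E → D` is a `𝒞`-cover of `D`. -/
def IsCover (S : Type u) [Ring S] (𝒞 : ModuleCat.{u} S → Prop)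
    (E D : ModuleCat.{u} S) (φ : E →ₗ[S] D) : Prop :=
  IsPrecover S 𝒞 E D φ ∧ ∀ g : E →ₗ[S] E, φ ∘ₗ g = φ → Function.Bijective g

/-- `f : X → F` is a `𝒞`-preenvelope of `X`. -/
def IsPreenvelope (S : Type u) [Ring S] (𝒞 : ModuleCat.{u} S → Prop)
    (X F : ModuleCat.{u} S) (f : X →ₗ[S] F) : Prop :=
  𝒞 F ∧ ∀ F' : ModuleCat.{u} S, 𝒞 F' → ∀ g : X →ₗ[S] F', ∃ h : F →ₗ[S] F', h ∘ₗ f = g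

/-- A module is reduced if it has no nonzero injective submodules. -/
def IsReducedModule (S : Type u) [Ring S] (M : ModuleCat.{u} S) : Prop :=
  ∀ N : Submodule S M, Module.Injective S N → N = ⊥

/-- `D` is an `m`-th cosyzygy of `M`: there is an exact sequence
`0 → M → E^0 → ⋯ → E^{m-1} → D → 0` with each `E^i` injective. -/
def IsCosyzygy (S : Type u) [Ring S] : ℕ → ModuleCat.{u} S → ModuleCat.{u} S → Prop
  | 0, M, D => Nonempty ((M : Type u) ≃ₗ[S] D)
  | m + 1, M, D => ∃ (C E : ModuleCat.{u} S), IsCosyzygy S m M C ∧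
      Module.Injective S E ∧
      ∃ (ι : C →ₗ[S] E) (p : E →ₗ[S] D),
        Function.Injective ι ∧ Function.Surjective p ∧ Function.Exact ι p


/-- A left `R`-module `F` is flat: `Tor_1(A, F) = 0` for every right module `A`
(encoded via character duality, as above). -/
def IsFlatModule (R : Type u) [Ring R] (F : ModuleCat.{u} R) : Prop :=
  ∀ A : ModuleCat.{u} Rᵐᵒᵖ, torVanish R 1 A F

end

/-!
Write `K = Ω⁰`, `Ω¹`, `Ω²`, … for the syzygies in a resolution of `K` by finitely generated
projectives. Since `Tor₁(N, Ωᵏ⁺¹) = Tor_{k+1}(N, Ω¹)`, the right module `(Ωᵏ⁺¹)⋆` is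
`(n,k)`-weak cotorsion, so no preenvelopes are needed: apply the hypothesis to this one module.
It gives `Tor_{k+1}((Ωᵏ⁺¹)⋆, K) = 0`, i.e. the evaluation `Ωᵏ⁺¹ → (Ωᵏ⁺¹)⋆⋆` extends to the
finitely generated projective module containing `Ωᵏ⁺¹`. As the evaluation is a pure monomorphism,
the inclusion of `Ωᵏ⁺¹` splits, so `Ωᵏ` is projective.
-/

section Extension

variable {S : Type*} [Ring S] {X Y B : Type*} [AddCommGroup X] [Module S X]
  [AddCommGroup Y] [Module S Y] [AddCommGroup B] [Module S B]

theorem exists_comp_eq_of_ker_le_ker {p : X →ₗ[S] Y} (hp : Function.Surjective p)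
    {f : X →ₗ[S] B} (h : LinearMap.ker p ≤ LinearMap.ker f) : ∃ g : Y →ₗ[S] B, g ∘ₗ p = f := by
  refine ⟨(LinearMap.ker p).liftQ f h ∘ₗ (p.quotKerEquivOfSurjective hp).symm, ?_⟩
  ext x
  simp [p.quotKerEquivOfSurjective_symm_apply hp]

/-- Every linear map `L → B` extends to the ambient module `X` of `L`. For `X` projective this
says `Ext¹(X ⧸ L, B) = 0`. -/
def MapsExtend (L : Submodule S X) (B : Type*) [AddCommGroup B] [Module S B] : Prop :=
  ∀ h : L →ₗ[S] B, ∃ h' : X →ₗ[S] B, h' ∘ₗ L.subtype = h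

theorem mapsExtend_range_iff (f : X →ₗ[S] Y) :
    MapsExtend (LinearMap.range f) B ↔
      ∀ h : X →ₗ[S] B, LinearMap.ker f ≤ LinearMap.ker h → ∃ h' : Y →ₗ[S] B, h' ∘ₗ f = h := by
  constructor
  · intro H h hfh
    obtain ⟨g, rfl⟩ := exists_comp_eq_of_ker_le_ker f.surjective_rangeRestrict
      (f.ker_rangeRestrict.trans_le hfh)
    obtain ⟨h', rfl⟩ := H g
    exact ⟨h', rfl⟩
  · intro H h
    obtain ⟨h', hh'⟩ := H (h ∘ₗ f.rangeRestrict)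
      (f.ker_rangeRestrict.symm.trans_le (LinearMap.ker_le_ker_comp _ _))
    refine ⟨h', ?_⟩
    rwa [← LinearMap.cancel_right f.surjective_rangeRestrict]

end Extension

section Resolution

variable {S : Type u} [Ring S] {A : ModuleCat.{u} S}

theorem projectiveResolution_range_d_eq_ker_d (P : ProjectiveResolution A) (i : ℕ) :
    LinearMap.range (P.complex.d (i + 2) (i + 1)).hom =
      LinearMap.ker (P.complex.d (i + 1) i).hom :=
  (P.exact_succ i).moduleCat_range_eq_ker

theorem extVanish_succ_iff_mapsExtend (P : ProjectiveResolution A) (i : ℕ) (B : ModuleCat.{u} S) :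
    extVanish S (i + 1) A B ↔ MapsExtend (LinearMap.range (P.complex.d (i + 1) i).hom) B := by
  have hcocycle (h : P.complex.X (i + 1) ⟶ B) : P.complex.d (i + 2) (i + 1) ≫ h = 0 ↔
      LinearMap.ker (P.complex.d (i + 1) i).hom ≤ LinearMap.ker h.hom := by
    rw [← projectiveResolution_range_d_eq_ker_d, LinearMap.range_le_ker_iff, ModuleCat.hom_ext_iff]
    rfl
  rw [extVanish, ← ModuleCat.isZero_iff_subsingleton, (P.isoExt (R := ℤ) (i + 1) B).isZero_iff,
    ← HomologicalComplex.exactAt_iff_isZero_homology,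
    HomologicalComplex.exactAt_iff' _ i (i + 1) (i + 2) (by simp) (by simp),
    ShortComplex.moduleCat_exact_iff, mapsExtend_range_iff]
  change (∀ h : P.complex.X (i + 1) ⟶ B, P.complex.d (i + 2) (i + 1) ≫ h = 0 →
    ∃ h' : P.complex.X i ⟶ B, P.complex.d (i + 1) i ≫ h' = h) ↔ _
  simp only [hcocycle, ModuleCat.hom_ext_iff, ModuleCat.hom_comp]
  rw [ModuleCat.homEquiv.forall_congr_left]
  simp only [ModuleCat.homEquiv.exists_congr_left]
  rfl

theorem extVanish_one_iff_mapsExtend (P : ProjectiveResolution A) (B : ModuleCat.{u} S) :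
    extVanish S 1 A B ↔
      MapsExtend (LinearMap.ker (P.π.f 0 : P.complex.X 0 ⟶ A).hom) B := by
  rw [extVanish_succ_iff_mapsExtend P 0, P.exact₀.moduleCat_range_eq_ker]

theorem projectiveResolution_π_surjective (P : ProjectiveResolution A) :
    Function.Surjective (P.π.f 0 : P.complex.X 0 ⟶ A).hom :=
  (ModuleCat.epi_iff_surjective _).1 (inferInstanceAs (Epi (P.π.f 0)))

/-- The sequence `⋯ → F 1 → F 0 → A → 0` is a projective resolution of `A`. This is the form in
which resolutions appear in `IsSpecialSFP`. -/
structure IsProjectiveResolution (F : ℕ → ModuleCat.{u} S) (d : ∀ i, F (i + 1) →ₗ[S] F i)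
    (π : F 0 →ₗ[S] A) : Prop where
  projective : ∀ i, Module.Projective S (F i)
  surjective : Function.Surjective π
  exact_zero : Function.Exact (d 0) π
  exact_succ : ∀ i, Function.Exact (d (i + 1)) (d i)

namespace IsProjectiveResolution

variable {F : ℕ → ModuleCat.{u} S} {d : ∀ i, F (i + 1) →ₗ[S] F i} {π : F 0 →ₗ[S] A}

theorem syzygy (res : IsProjectiveResolution F d π) (m : ℕ) :
    IsProjectiveResolution (A := ModuleCat.of S (LinearMap.range (d m)))
      (fun i => F (m + 1 + i)) (fun i => d (m + 1 + i)) (d m).rangeRestrict where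
  projective _ := res.projective _
  surjective := (d m).surjective_rangeRestrict
  exact_zero := (LinearMap.range (d m)).injective_subtype.comp_exact_iff_exact.1 (res.exact_succ m)
  exact_succ _ := res.exact_succ _

theorem tail (res : IsProjectiveResolution F d π) :
    IsProjectiveResolution (A := ModuleCat.of S (LinearMap.range (d 0)))
      (fun i => F (i + 1)) (fun i => d (i + 1)) (d 0).rangeRestrict where
  projective _ := res.projective _
  surjective := (d 0).surjective_rangeRestrict
  exact_zero := (res.syzygy 0).exact_zero
  exact_succ _ := res.exact_succ _

theorem comp_linearEquiv (res : IsProjectiveResolution F d π) {K : ModuleCat.{u} S}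
    (e : A ≃ₗ[S] K) : IsProjectiveResolution F d (e.toLinearMap ∘ₗ π) where
  projective := res.projective
  surjective := e.surjective.comp res.surjective
  exact_zero := e.injective.comp_exact_iff_exact.2 res.exact_zero
  exact_succ := res.exact_succ

/-- The deleted complex `⋯ → F 1 → F 0` of a resolution. -/
noncomputable def complex (res : IsProjectiveResolution F d π) : ChainComplex (ModuleCat.{u} S) ℕ :=
  ChainComplex.of F (fun i => ModuleCat.ofHom (d i)) fun i => by
    ext x
    exact (res.exact_succ i).apply_apply_eq_zero x

theorem complex_d (res : IsProjectiveResolution F d π) (i : ℕ) :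
    res.complex.d (i + 1) i = ModuleCat.ofHom (d i) := by
  dsimp only [complex]
  exact ChainComplex.of_d _ _ _

theorem complex_d_comp_π (res : IsProjectiveResolution F d π) :
    res.complex.d 1 0 ≫ ModuleCat.ofHom π = 0 := by
  rw [res.complex_d]
  ext x
  exact res.exact_zero.apply_apply_eq_zero x

theorem complex_exactAt_succ (res : IsProjectiveResolution F d π) (i : ℕ) :
    res.complex.ExactAt (i + 1) := by
  rw [HomologicalComplex.exactAt_iff' _ (i + 2) (i + 1) i (by simp) (by simp),
    ShortComplex.moduleCat_exact_iff_range_eq_ker]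
  change LinearMap.range (res.complex.d (i + 2) (i + 1)).hom =
    LinearMap.ker (res.complex.d (i + 1) i).hom
  rw [res.complex_d, res.complex_d]
  exact (res.exact_succ i).linearMap_ker_eq.symm

theorem complex_exact_zero (res : IsProjectiveResolution F d π) :
    (ShortComplex.mk _ _ res.complex_d_comp_π).Exact := by
  rw [ShortComplex.moduleCat_exact_iff_range_eq_ker]
  change LinearMap.range (res.complex.d 1 0).hom = LinearMap.ker π
  rw [res.complex_d]
  exact res.exact_zero.linearMap_ker_eq.symm

/-- The augmentation of the deleted complex, as a chain map to `A` in degree `0`. -/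
noncomputable def augmentation (res : IsProjectiveResolution F d π) :
    res.complex ⟶ (ChainComplex.single₀ _).obj A :=
  (ChainComplex.toSingle₀Equiv res.complex A).symm ⟨ModuleCat.ofHom π, res.complex_d_comp_π⟩

theorem quasiIso_augmentation (res : IsProjectiveResolution F d π) :
    QuasiIso res.augmentation where
  quasiIsoAt
    | 0 => by
      rw [ChainComplex.quasiIsoAt₀_iff, ShortComplex.quasiIso_iff_of_zeros' _ rfl rfl rfl]
      exact (ShortComplex.exact_and_epi_g_iff_of_iso
        (ShortComplex.isoMk (Iso.refl _) (Iso.refl _) (Iso.refl _))).2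
          ⟨res.complex_exact_zero, (ModuleCat.epi_iff_surjective _).2 res.surjective⟩
    | i + 1 => by
      rw [quasiIsoAt_iff_exactAt' _ _ (ChainComplex.exactAt_succ_single_obj _ _)]
      exact res.complex_exactAt_succ i

/-- A resolution presented by linear maps, as one of Mathlib's projective resolutions. -/
noncomputable def toProjectiveResolution (res : IsProjectiveResolution F d π) :
    ProjectiveResolution A where
  complex := res.complex
  projective i := (IsProjective.iff_projective (F i)).1 (res.projective i)
  π := res.augmentation
  quasiIso := res.quasiIso_augmentation

theorem extVanish_succ_iff (res : IsProjectiveResolution F d π) (i : ℕ) (B : ModuleCat.{u} S) :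
    extVanish S (i + 1) A B ↔ MapsExtend (LinearMap.range (d i)) B := by
  rw [extVanish_succ_iff_mapsExtend res.toProjectiveResolution i B]
  change MapsExtend (LinearMap.range (res.complex.d (i + 1) i).hom) B ↔ _
  rw [res.complex_d]
  rfl

end IsProjectiveResolution

end Resolution

namespace CharGroup

variable {R : Type u} [Ring R] {M N : Type u} [AddCommGroup M] [AddCommGroup N]

@[simp]
theorem toHom_smul_left [Module Rᵐᵒᵖ N] (r : R) (c : CharGroup N) (x : N) :
    toHom (r • c) x = toHom c (MulOpposite.op r • x) := rfl

@[simp]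
theorem toHom_smul_right [Module R M] (r : Rᵐᵒᵖ) (c : CharGroup M) (x : M) :
    toHom (r • c) x = toHom c (r.unop • x) := rfl

@[simp]
theorem toHom_zero (x : M) : toHom (0 : CharGroup M) x = 0 := rfl

@[simp]
theorem toHom_add (c c' : CharGroup M) (x : M) : toHom (c + c') x = toHom c x + toHom c' x := rfl

@[simp]
theorem toHom_sum {ι : Type*} (s : Finset ι) (c : ι → CharGroup M) (x : M) :
    toHom (∑ i ∈ s, c i) x = ∑ i ∈ s, toHom (c i) x :=
  map_sum (AddMonoidHom.mk' (fun c : CharGroup M => toHom c x) fun _ _ => rfl) c s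

/-- The adjunction `Hom_R(M, N⋆) ≃ Hom_{Rᵐᵒᵖ}(N, M⋆)`; both sides are the `R`-balanced maps
`N × M → ℚ/ℤ`. -/
def homSwap [Module R M] [Module Rᵐᵒᵖ N] :
    (M →ₗ[R] CharGroup N) ≃ (N →ₗ[Rᵐᵒᵖ] CharGroup M) where
  toFun f :=
    { toFun := fun y => ofHom (AddMonoidHom.mk' (fun x => toHom (f x) y) fun x x' => by
        rw [map_add, toHom_add])
      map_add' := fun y y' => hom_ext fun x => map_add (toHom (f x)) y y'
      map_smul' := fun r y => hom_ext fun x => by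
        change toHom (f x) (r • y) = toHom (f (r.unop • x)) y
        rw [f.map_smul, toHom_smul_left, MulOpposite.op_unop] }
  invFun g :=
    { toFun := fun x => ofHom (AddMonoidHom.mk' (fun y => toHom (g y) x) fun y y' => by
        rw [map_add, toHom_add])
      map_add' := fun x x' => hom_ext fun y => map_add (toHom (g y)) x x'
      map_smul' := fun r x => hom_ext fun y => by
        change toHom (g y) (r • x) = toHom (g (MulOpposite.op r • y)) x
        rw [g.map_smul, toHom_smul_right, MulOpposite.unop_op] }
  left_inv _ := rfl
  right_inv _ := rfl

/-- The evaluation map `M → M⋆⋆`. -/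
def eval [Module R M] : M →ₗ[R] CharGroup (CharGroup M) :=
  homSwap.symm LinearMap.id

/-- The map `N⋆ → M⋆` induced by a homomorphism `M → N` of right modules. -/
def dual [Module Rᵐᵒᵖ M] [Module Rᵐᵒᵖ N] (f : M →ₗ[Rᵐᵒᵖ] N) : CharGroup N →ₗ[R] CharGroup M where
  toFun c := ofHom ((toHom c).comp f.toAddMonoidHom)
  map_add' _ _ := rfl
  map_smul' r c := hom_ext fun x => congrArg (toHom c) (f.map_smul (MulOpposite.op r) x).symm

theorem dual_surjective_of_injective [Module Rᵐᵒᵖ M] [Module Rᵐᵒᵖ N] {f : M →ₗ[Rᵐᵒᵖ] N}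
    (hf : Function.Injective f) : Function.Surjective (dual f) :=
  CharacterModule.dual_surjective_of_injective f.toAddMonoidHom.toIntLinearMap hf

theorem exists_annihilating_apply_ne_zero {G : Type*} [AddCommGroup G] {T : AddSubgroup G} {y : G}
    (hy : y ∉ T) : ∃ χ : G →+ AddCircle (1 : ℚ), T ≤ χ.ker ∧ χ y ≠ 0 := by
  have hne : QuotientAddGroup.mk' T y ≠ 0 := fun h => hy ((QuotientAddGroup.eq_zero_iff y).1 h)
  obtain ⟨χ, hχ⟩ := CharacterModule.exists_character_apply_ne_zero_of_ne_zero hne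
  refine ⟨AddMonoidHom.comp χ (QuotientAddGroup.mk' T), fun x hx => ?_, hχ⟩
  have hx0 : QuotientAddGroup.mk' T x = 0 := (QuotientAddGroup.eq_zero_iff x).2 hx
  change χ (QuotientAddGroup.mk' T x) = 0
  rw [hx0, map_zero]

end CharGroup

section Tor

open CharGroup

variable {R : Type u} [Ring R]

-- In terms of balanced maps into `ℚ/ℤ`: extend `b` from `ker π × Y` to `t` on `X × P`, which is
-- possible as `P` is projective, then correct `t` by a map on `N × P` so that it descends to
-- `X × Y`.
theorem MapsExtend.ker_charGroup {P Y X N : Type u} [AddCommGroup P] [Module R P]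
    [AddCommGroup Y] [Module R Y] [AddCommGroup X] [Module Rᵐᵒᵖ X] [AddCommGroup N] [Module Rᵐᵒᵖ N]
    [Module.Projective R P] {q : P →ₗ[R] Y} (hq : Function.Surjective q) {π : X →ₗ[Rᵐᵒᵖ] N}
    (hπ : Function.Surjective π) (hN : MapsExtend (LinearMap.ker q) (CharGroup N)) :
    MapsExtend (LinearMap.ker π) (CharGroup Y) := by
  intro b
  obtain ⟨t, ht⟩ : ∃ t : P →ₗ[R] CharGroup X,
      dual (LinearMap.ker π).subtype ∘ₗ t = homSwap.symm b ∘ₗ q :=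
    Module.projective_lifting_property _ _
      (dual_surjective_of_injective (LinearMap.ker π).injective_subtype)
  have ht_apply (p : P) (x : LinearMap.ker π) : toHom (t p) x = toHom (b x) (q p) :=
    DFunLike.congr_fun (congrArg toHom (LinearMap.congr_fun ht p)) x
  obtain ⟨w, hw⟩ : ∃ w : N →ₗ[Rᵐᵒᵖ] CharGroup (LinearMap.ker q),
      w ∘ₗ π = homSwap (t ∘ₗ (LinearMap.ker q).subtype) := by
    refine exists_comp_eq_of_ker_le_ker hπ fun x hx => hom_ext fun z => ?_
    change toHom (t z) x = 0
    rw [ht_apply z ⟨x, hx⟩, z.2, map_zero]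
  obtain ⟨w', hw'⟩ := hN (homSwap.symm w)
  have hw'_apply (z : LinearMap.ker q) (x : X) : toHom (w' z) (π x) = toHom (t z) x := by
    have h₁ := DFunLike.congr_fun (congrArg toHom (LinearMap.congr_fun hw' z)) (π x)
    have h₂ := DFunLike.congr_fun (congrArg toHom (LinearMap.congr_fun hw x)) z
    exact h₁.trans h₂
  obtain ⟨s, hs⟩ : ∃ s : Y →ₗ[R] CharGroup X, s ∘ₗ q = t - dual π ∘ₗ w' := by
    refine exists_comp_eq_of_ker_le_ker hq fun p hp => hom_ext fun x => ?_
    change toHom (t p) x - toHom (w' p) (π x) = 0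
    rw [hw'_apply ⟨p, hp⟩, sub_self]
  refine ⟨homSwap s, LinearMap.ext fun x => hom_ext fun y => ?_⟩
  obtain ⟨p, rfl⟩ := hq y
  have hsp : toHom (s (q p)) x = toHom (t p) x - toHom (w' p) (π x) :=
    DFunLike.congr_fun (congrArg toHom (LinearMap.congr_fun hs p)) (x : X)
  change toHom (s (q p)) x = _
  rw [hsp, ht_apply, x.2, map_zero, sub_zero]

theorem extVanish_one_charRight_of_torVanish {N : ModuleCat.{u} Rᵐᵒᵖ} {Y : ModuleCat.{u} R}
    (h : torVanish R 1 N Y) : extVanish Rᵐᵒᵖ 1 N (charRight R Y) := by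
  let P := ProjectiveResolution.of Y
  let Q := ProjectiveResolution.of N
  have : Module.Projective R (P.complex.X 0) :=
    (IsProjective.iff_projective _).2 (P.projective 0)
  exact (extVanish_one_iff_mapsExtend Q _).2 (MapsExtend.ker_charGroup
    (projectiveResolution_π_surjective P) (projectiveResolution_π_surjective Q)
    ((extVanish_one_iff_mapsExtend P _).1 h))

end Tor

section Pure

variable {R : Type*} [Ring R]

/-- `f : M → N` is pure: every finite system of linear equations over `R` with right-hand sides in
`M` that becomes solvable in `N` is already solvable in `M`. -/
def IsPureHom {M N : Type*} [AddCommGroup M] [Module R M] [AddCommGroup N] [Module R N]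
    (f : M →ₗ[R] N) : Prop :=
  ∀ ⦃l m : ℕ⦄ (a : Fin l → Fin m → R) (y : Fin l → M) (x : Fin m → N),
    (∀ i, ∑ j, a i j • x j = f (y i)) → ∃ z : Fin m → M, ∀ i, ∑ j, a i j • z j = y i

theorem IsPureHom.exists_comp_eq {M N P F : Type*} [AddCommGroup M] [Module R M] [AddCommGroup N]
    [Module R N] [AddCommGroup P] [Module R P] [Module.Finite R P] [AddCommGroup F] [Module R F]
    [Module.Finite R F] [Module.Projective R F] {f : M →ₗ[R] N} (hf : IsPureHom f)
    {e : P →ₗ[R] F} {h : P →ₗ[R] M} {g : F →ₗ[R] N} (hg : g ∘ₗ e = f ∘ₗ h) :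
    ∃ r : F →ₗ[R] M, r ∘ₗ e = h := by
  obtain ⟨m, p, s, -, -, hps⟩ := Module.Finite.exists_comp_eq_id_of_projective R F
  obtain ⟨l, c, hc⟩ := Module.Finite.exists_fin' R P
  let gen (i : Fin l) : P := c (Pi.single i 1)
  -- As `F` is a retract of `Rᵐ`, extending `h` amounts to solving in `M` the linear system with
  -- rows `s (e (gen i))` and right-hand sides `h (gen i)`; `g` provides a solution in `N`.
  obtain ⟨z, hz⟩ := hf (fun i => s (e (gen i))) (fun i => h (gen i))
    (fun j => g (p (Pi.single j 1))) fun i => by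
      calc ∑ j, s (e (gen i)) j • g (p (Pi.single j 1))
          = (g ∘ₗ p) (s (e (gen i))) := by
            conv_rhs => rw [← Finset.univ_sum_single (s (e (gen i)))]
            simp [← map_smul, ← Pi.single_smul]
        _ = g (e (gen i)) := congrArg g (LinearMap.congr_fun hps _)
        _ = f (h (gen i)) := LinearMap.congr_fun hg _
  refine ⟨Fintype.linearCombination R z ∘ₗ s, ?_⟩
  rw [← LinearMap.cancel_right hc]
  refine LinearMap.pi_ext' fun i => LinearMap.ext_ring ?_
  exact hz i

end Pure

section Bidual

open CharGroup

variable {R M : Type u} [Ring R] [AddCommGroup M] [Module R M]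

theorem exists_sum_smul_eq_of_charGroup {l m : ℕ} (a : Fin l → Fin m → R) (y : Fin l → M)
    (h : ∀ χ : Fin l → CharGroup M, (∀ j, ∑ i, MulOpposite.op (a i j) • χ i = 0) →
      ∑ i, toHom (χ i) (y i) = 0) :
    ∃ z : Fin m → M, ∀ i, ∑ j, a i j • z j = y i := by
  let T : (Fin m → M) →+ (Fin l → M) :=
    AddMonoidHom.mk' (fun z i => ∑ j, a i j • z j) fun z z' => by
      ext i
      simp [Finset.sum_add_distrib]
  suffices y ∈ T.range from this.imp fun z hz => congrFun hz
  by_contra hy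
  obtain ⟨χ, hχT, hχy⟩ := exists_annihilating_apply_ne_zero hy
  let χc (i : Fin l) : CharGroup M := ofHom (χ.comp (AddMonoidHom.single (fun _ => M) i))
  have hχ (v : Fin l → M) : χ v = ∑ i, toHom (χc i) (v i) := by
    conv_lhs => rw [← Finset.univ_sum_single v, map_sum]
    rfl
  refine hχy ((hχ y).trans (h χc fun j => hom_ext fun w => ?_))
  have hw : χ (T (Pi.single j w)) = 0 := hχT ⟨_, rfl⟩
  have hT (i : Fin l) : T (Pi.single j w) i = a i j • w := by
    change ∑ j', a i j' • (Pi.single j w : Fin m → M) j' = a i j • w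
    simp [Pi.single_apply, smul_ite]
  simpa [hχ, hT] using hw

theorem isPureHom_eval : IsPureHom (eval (R := R) (M := M)) := by
  intro l m a y x hx
  refine exists_sum_smul_eq_of_charGroup a y fun χ hχ => ?_
  calc ∑ i, toHom (χ i) (y i)
      = ∑ i, toHom (eval (R := R) (y i)) (χ i) := rfl
    _ = ∑ i, ∑ j, toHom (x j) (MulOpposite.op (a i j) • χ i) := by simp [← hx]
    _ = ∑ j, toHom (x j) (∑ i, MulOpposite.op (a i j) • χ i) := by
      rw [Finset.sum_comm]
      simp only [map_sum]
    _ = 0 := by simp [hχ]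

theorem mapsExtend_of_mapsExtend_bidual [Module.Finite R M] [Module.Projective R M]
    {L : Submodule R M} (hL : L.FG) (h : MapsExtend L (CharGroup (CharGroup L))) (B : Type*)
    [AddCommGroup B] [Module R B] : MapsExtend L B := by
  have : Module.Finite R L := Module.Finite.iff_fg.2 hL
  obtain ⟨g, hg⟩ := h eval
  obtain ⟨r, hr⟩ : ∃ r : M →ₗ[R] L, r ∘ₗ L.subtype = LinearMap.id :=
    isPureHom_eval.exists_comp_eq (hg.trans eval.comp_id.symm)
  exact fun b => ⟨b ∘ₗ r, by rw [LinearMap.comp_assoc, hr, LinearMap.comp_id]⟩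

end Bidual

section WeakCotorsion

variable {R : Type u} [Ring R] {n k : ℕ} {K : ModuleCat.{u} R} {F : ℕ → ModuleCat.{u} R}
  {d : ∀ i, F (i + 1) →ₗ[R] F i} {π : F 0 →ₗ[R] K}

theorem IsSpecialSFP.exists_resolution (hK : IsSpecialSFP R n K) :
    ∃ (F : ℕ → ModuleCat.{u} R) (d : ∀ i, F (i + 1) →ₗ[R] F i) (π : F 0 →ₗ[R] K),
      IsProjectiveResolution F d π ∧ (∀ i, Module.Finite R (F i)) ∧
        IsSpecialSFP R n (ModuleCat.of R (LinearMap.range (d 0))) := by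
  obtain ⟨U, F, d, π, hproj, hfin, hπ, h0, hd, hK⟩ := hK
  have res : IsProjectiveResolution F d π := ⟨hproj, hπ, h0, hd⟩
  have tail := res.tail
  cases n with
  | zero =>
    obtain ⟨e⟩ := hK
    exact ⟨F, d, _, res.comp_linearEquiv e.symm, fun i => hfin i i.zero_le,
      _, _, _, _, tail.projective, fun i _ => hfin _ (Nat.zero_le _), tail.surjective,
      tail.exact_zero, tail.exact_succ, ⟨LinearEquiv.refl R _⟩⟩
  | succ n =>
    obtain ⟨e⟩ := hK
    exact ⟨_, _, _, (res.syzygy n).comp_linearEquiv e.symm, fun i => hfin _ (Nat.le_add_right _ i),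
      _, _, _, _, tail.projective, fun i hi => hfin _ (Nat.le_succ_of_le hi), tail.surjective,
      tail.exact_zero, tail.exact_succ, ⟨LinearEquiv.refl R _⟩⟩

theorem IsProjectiveResolution.isNKWeakCotorsion_charRight (res : IsProjectiveResolution F d π)
    (hΩ : IsSpecialSFP R n (ModuleCat.of R (LinearMap.range (d 0)))) :
    IsNKWeakCotorsion R n k (charRight R (ModuleCat.of R (LinearMap.range (d k)))) :=
  fun _ hN => extVanish_one_charRight_of_torVanish <|
    ((res.syzygy k).extVanish_succ_iff 0 _).2 ((res.tail.extVanish_succ_iff k _).1 (hN _ hΩ))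

end WeakCotorsion

/-- `l.n.sp.gldim(R) ≤ k` iff every `(n,k)`-weak cotorsion right
module has `n`-weak flat dimension at most `k`. -/
theorem stmt15 (R : Type u) [Ring R] (n k : ℕ) :
    lnspGldimLE R n k ↔
      (∀ M : ModuleCat.{u} Rᵐᵒᵖ, IsNKWeakCotorsion R n k M → nwfdLE R n k M) := by
  refine ⟨fun H M _ K hK => H K hK _, fun H K hK B => ?_⟩
  obtain ⟨F, d, π, res, hfin, hΩ⟩ := hK.exists_resolution
  have : Module.Projective R (F k) := res.projective k
  have hcot : IsNKWeakCotorsion R n k (charRight R (ModuleCat.of R (LinearMap.range (d k)))) :=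
    res.isNKWeakCotorsion_charRight hΩ
  have hbidual : MapsExtend (LinearMap.range (d k))
      (CharGroup (CharGroup (LinearMap.range (d k)))) :=
    (res.extVanish_succ_iff k _).1 (H _ hcot K hK)
  exact (res.extVanish_succ_iff k B).2
    (mapsExtend_of_mapsExtend_bidual Submodule.FG.of_finite hbidual B)
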